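/- (Group diameter contraction rate.) If the persistent connectivity assumption holds, then for every p ∈ ℕ, Δ_N(t_{p+1}) ≤ (1 − 𝐫(t_{p+1})^{−⌊n/2⌋} / (8n²)^{⌊n/2⌋}) · Δ_N(t_p). -/

import Mathlib

/-!
Write `R = 𝐫(t_{p+1})`, `m = ⌊n/2⌋` and `c = 1 / (4 n² R)`. If `R = ∞` the claim is that the diameter
does not increase. Otherwise `R ≥ 1`, and on `[0, t_{p+1}]` the weight entering `S` and the weight
leaving `S` are, for every cut `S`, within a factor `R` of each other (`cutRate_le_of_rbold`).

The dynamics is invariant under affine maps, so after a translation and possibly a reflection the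
minimum at time `t_p` is `0` and at least `n - m` agents are `≥ ε = Δ/2`. The core is `advance`: if
`n - k` agents are `≥ ε` at time `s`, then on any interval `[s, T]` on which every cut accumulates
weight at least `1`, there are `q ≥ 1` and a time at which `n - k + q` agents are `≥ c ^ q ε`. A
trajectory stays above its minimum, so chaining this over the `m` windows of `[t_p, t_{p+1}]`
(`windows`) brings all agents above `c ^ m Δ / 2 ≥ Δ / (8 n² R) ^ m`.

To prove `advance`, let `H` be the set of the `n - k` high agents and suppose no level is reached.
Then the increasing rearrangement `y_0 ≤ y_1 ≤ …` of the state satisfies `y_i < c ^ (k - i) ε` for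
`i < k`. Consider the functional `∑_{i < k} R ^ (-i) y_i`. The geometric weights absorb the imbalance
of every cut, so that Abel summation over the gaps of `y` (`rank_flow`) bounds its growth rate below
by `R ^ (-(k - 1))` times the gap `y_k - y_{k-1}` times the weight flowing into the low set `Hᶜ`.
The staircase bounds the functional above, hence `R ∫ inflow ≤ 1/4` as long as the agents of `H`
stay above `ε / 2` (`inflow_bound`). By cut balance the weight through which `H` loses height is then
at most `1/4`, so `H` stays above `3ε/4` (`IsTrajectory.leak`), and a continuity argument
(`continuation`) makes this valid on all of `[s, T]`. There the inflow is at least `1`, a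
contradiction.

By the rearrangement inequality the functional is a minimum, over permutations, of absolutely
continuous functions. Its growth, like that of the minimum of the state, is controlled by
`min_growth`: wherever a minimum of finitely many absolutely continuous functions is differentiable
together with them, its derivative is that of any active function.
-/

open MeasureTheory Filter Finset
open scoped ENNReal

/-- Interaction weights: non-negative, measurable, integrable on bounded intervals. -/
def IsWeight (n : ℕ) (a : Fin n → Fin n → ℝ → ℝ) : Prop :=
  ∀ i j : Fin n, (∀ t, 0 ≤ a i j t) ∧ Measurable (a i j) ∧
    ∀ T : ℝ, IntervalIntegrable (a i j) MeasureTheory.volume 0 T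

/-- A trajectory of the continuous-time consensus system: a (locally absolutely) continuous
function satisfying the Carathéodory integral equation. -/
def IsTrajectory (n : ℕ) (a : Fin n → Fin n → ℝ → ℝ) (x : ℝ → Fin n → ℝ) : Prop :=
  (∀ i : Fin n, ContinuousOn (fun t => x t i) (Set.Ici (0:ℝ))) ∧
  (∀ i : Fin n, ∀ t : ℝ, 0 ≤ t →
    IntervalIntegrable (fun s => ∑ j : Fin n, a i j s * (x s j - x s i))
      MeasureTheory.volume 0 t ∧
    x t i = x 0 i + ∫ s in (0:ℝ)..t, ∑ j : Fin n, a i j s * (x s j - x s i))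

/-- Group diameter Δ_N(t). -/
noncomputable def diam (n : ℕ) (x : ℝ → Fin n → ℝ) (t : ℝ) : ℝ :=
  (⨆ i, x t i) - (⨅ i, x t i)

/-- Persistent connectivity: the graph with edge (j,i) whenever ∫_0^∞ a_{ij} = ∞
is strongly connected. -/
def PersistentConn (n : ℕ) (a : Fin n → Fin n → ℝ → ℝ) : Prop :=
  ∀ u v : Fin n, Relation.ReflTransGen
    (fun j i => ∫⁻ s in Set.Ioi (0:ℝ), ENNReal.ofReal (a i j s) = ⊤) u v

noncomputable def cutSum (n : ℕ) (a : Fin n → Fin n → ℝ → ℝ)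
    (S : Finset (Fin n)) (t0 t : ℝ) : ℝ :=
  ∑ i ∈ S, ∑ j ∈ Sᶜ, ∫ s in t0..t, a i j s

noncomputable def minCut (n : ℕ) (a : Fin n → Fin n → ℝ → ℝ) (t0 t : ℝ) : ℝ :=
  sInf ((fun S => cutSum n a S t0 t) '' {S : Finset (Fin n) | S.Nonempty ∧ S ≠ Finset.univ})

/-- The smallest `t ≥ t0` with `minCut n a t0 t = 1`. -/
noncomputable def nextTime (n : ℕ) (a : Fin n → Fin n → ℝ → ℝ) (t0 : ℝ) : ℝ :=
  sInf {t : ℝ | t0 ≤ t ∧ minCut n a t0 t = 1}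

/-- The rescaling sequence (t_p): t_0 = 0 and t_{p+1} is obtained from t_p by ⌊n/2⌋
steps of `nextTime`. -/
noncomputable def tpSeq (n : ℕ) (a : Fin n → Fin n → ℝ → ℝ) : ℕ → ℝ :=
  fun p => ((nextTime n a)^[n/2])^[p] 0

/-- Intermediate times t_p^q. -/
noncomputable def tpq (n : ℕ) (a : Fin n → Fin n → ℝ → ℝ) (p q : ℕ) : ℝ :=
  (nextTime n a)^[q] (tpSeq n a p)

open Classical in
/-- The ratio r_S(t) of reciprocal interaction weights across the cut (S, N∖S). -/
noncomputable def rS (n : ℕ) (a : Fin n → Fin n → ℝ → ℝ) (S : Finset (Fin n)) (t : ℝ) : ℝ≥0∞ :=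
  if 0 < ∑ i ∈ S, ∑ j ∈ Sᶜ, a j i t then
    ENNReal.ofReal ((∑ i ∈ S, ∑ j ∈ Sᶜ, a i j t) / (∑ i ∈ S, ∑ j ∈ Sᶜ, a j i t))
  else if (∑ i ∈ S, ∑ j ∈ Sᶜ, a i j t) = 0 then 1 else ⊤

/-- r(t): maximal ratio over nonempty proper subsets. -/
noncomputable def rmax (n : ℕ) (a : Fin n → Fin n → ℝ → ℝ) (t : ℝ) : ℝ≥0∞ :=
  ⨆ S ∈ {S : Finset (Fin n) | S.Nonempty ∧ S ≠ Finset.univ}, rS n a S t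

/-- 𝐫(t) = sup_{s ∈ [0,t]} r(s). -/
noncomputable def rbold (n : ℕ) (a : Fin n → Fin n → ℝ → ℝ) (t : ℝ) : ℝ≥0∞ :=
  ⨆ s ∈ Set.Icc (0:ℝ) t, rmax n a s

/-- σ_t sorts the pairs (x_i(t), i) lexicographically. -/
def IsSortingPerm (n : ℕ) (x : ℝ → Fin n → ℝ) (σ : ℝ → Equiv.Perm (Fin n)) : Prop :=
  ∀ t : ℝ, ∀ i j : Fin n, i < j →
    x t (σ t i) < x t (σ t j) ∨ (x t (σ t i) = x t (σ t j) ∧ σ t i < σ t j)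

/-! ### Growth of a minimum of absolutely continuous functions -/

theorem absolutelyContinuousOnInterval_inf {K : Type*} [Fintype K] [Nonempty K] {s t : ℝ}
    {ψ : K → ℝ → ℝ} (h : ∀ κ, AbsolutelyContinuousOnInterval (ψ κ) s t) :
    AbsolutelyContinuousOnInterval
      (fun u => Finset.univ.inf' Finset.univ_nonempty (fun κ => ψ κ u)) s t := by
  have key : ∀ u v : ℝ, dist (Finset.univ.inf' Finset.univ_nonempty (fun κ => ψ κ u))
      (Finset.univ.inf' Finset.univ_nonempty (fun κ => ψ κ v)) ≤ ∑ κ, dist (ψ κ u) (ψ κ v) := by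
    have one : ∀ u v : ℝ, Finset.univ.inf' Finset.univ_nonempty (fun κ => ψ κ u) -
        Finset.univ.inf' Finset.univ_nonempty (fun κ => ψ κ v) ≤ ∑ κ, dist (ψ κ u) (ψ κ v) := by
      intro u v
      obtain ⟨κ, -, hκ⟩ := Finset.exists_mem_eq_inf' (Finset.univ_nonempty (α := K))
        (fun κ => ψ κ v)
      have h1 : Finset.univ.inf' Finset.univ_nonempty (fun κ => ψ κ u) ≤ ψ κ u :=
        Finset.inf'_le _ (Finset.mem_univ κ)
      have h2 : dist (ψ κ u) (ψ κ v) ≤ ∑ κ, dist (ψ κ u) (ψ κ v) :=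
        Finset.single_le_sum (f := fun κ => dist (ψ κ u) (ψ κ v))
          (fun _ _ => dist_nonneg) (Finset.mem_univ κ)
      have h3 := le_abs_self (ψ κ u - ψ κ v)
      rw [← Real.dist_eq] at h3
      rw [hκ]
      linarith
    intro u v
    rw [Real.dist_eq, abs_le]
    have h1 := one u v
    have h2 := one v u
    simp_rw [fun κ => dist_comm (ψ κ v) (ψ κ u)] at h2
    constructor <;> linarith
  have lim := tendsto_finsetSum (Finset.univ : Finset K) (fun κ _ => h κ)
  simp only [Finset.sum_const_zero] at lim
  refine squeeze_zero (fun E => Finset.sum_nonneg fun _ _ => dist_nonneg) (fun E => ?_) lim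
  rw [Finset.sum_comm]
  exact Finset.sum_le_sum fun i _ => key _ _

/-- If `φ κ` has derivative `g κ` almost everywhere on `[s, t]` and at each time some minimal member
of the family has derivative at least `D`, then the minimum of the family grows at least by the
integral of `D`. The minimum is absolutely continuous, and where it touches `φ κ` from below the
two derivatives agree. -/
theorem min_growth {K : Type*} [Fintype K] {s t : ℝ} (hst : s ≤ t)
    {φ g : K → ℝ → ℝ} {D : ℝ → ℝ}
    (hφ : ∀ κ, ∀ u ∈ Set.Icc s t, φ κ u = φ κ s + ∫ v in s..u, g κ v)
    (hg : ∀ κ, IntervalIntegrable (g κ) volume s t)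
    (hD : IntervalIntegrable D volume s t)
    (h : ∀ u ∈ Set.Icc s t, ∃ κ, (∀ κ', φ κ u ≤ φ κ' u) ∧ D u ≤ g κ u)
    {m : ℝ} (hm : ∀ κ, m ≤ φ κ s) (κ : K) : m + ∫ v in s..t, D v ≤ φ κ t := by
  have : Nonempty K := ⟨κ⟩
  set ψ : K → ℝ → ℝ := fun κ u => φ κ s + ∫ v in s..u, g κ v with hψ
  set f : ℝ → ℝ := fun u => Finset.univ.inf' Finset.univ_nonempty (fun κ => ψ κ u) with hf
  have hψac : ∀ κ, AbsolutelyContinuousOnInterval (ψ κ) s t := by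
    intro κ
    have h1 := (hg κ).absolutelyContinuousOnInterval_intervalIntegral (c := s) (by simp)
    have h2 : AbsolutelyContinuousOnInterval (fun _ : ℝ => φ κ s) s t := by
      simpa [AbsolutelyContinuousOnInterval] using tendsto_const_nhds
    exact h2.fun_add h1
  have hfac : AbsolutelyContinuousOnInterval f s t := absolutelyContinuousOnInterval_inf hψac
  have hle : ∀ κ u, f u ≤ ψ κ u := fun κ u => Finset.inf'_le _ (Finset.mem_univ κ)
  have hder : ∀ᵐ u, u ∈ Set.Icc s t → D u ≤ deriv f u := by
    have h1 : ∀ᵐ u, ∀ κ, u ∈ Set.uIcc s t → ∀ c ∈ Set.uIcc s t,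
        HasDerivAt (fun x => ∫ v in c..x, g κ v) (g κ u) u :=
      ae_all_iff.2 fun κ => (hg κ).ae_hasDerivAt_integral
    filter_upwards [h1, hfac.ae_differentiableAt] with u hu1 hu2 hu
    have hu' : u ∈ Set.uIcc s t := by rwa [Set.uIcc_of_le hst]
    obtain ⟨κ, hκ, hDκ⟩ := h u hu
    have hd : HasDerivAt (ψ κ) (g κ u) u := (hu1 κ hu' s (by simp)).const_add _
    have hfu : f u = ψ κ u := by
      refine le_antisymm (hle κ u) (Finset.le_inf' _ _ fun κ' _ => ?_)
      rw [hψ]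
      simp only
      rw [← hφ κ u hu, ← hφ κ' u hu]
      exact hκ κ'
    have hmin : IsLocalMin (fun v => ψ κ v - f v) u := by
      refine Filter.Eventually.of_forall fun v => ?_
      simp only [hfu, sub_self]
      linarith [hle κ v]
    have := hmin.hasDerivAt_eq_zero (hd.sub (hu2 hu').hasDerivAt)
    linarith
  have hDle : ∫ v in s..t, D v ≤ ∫ v in s..t, deriv f v :=
    intervalIntegral.integral_mono_ae_restrict hst hD hfac.intervalIntegrable_deriv
      ((ae_restrict_iff' measurableSet_Icc).2 hder)
  rw [hfac.integral_deriv_eq_sub] at hDle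
  have h0 : m ≤ f s := Finset.le_inf' _ _ fun κ _ => by simpa [hψ] using hm κ
  have h1 := hle κ t
  rw [hψ] at h1
  simp only at h1
  rw [← hφ κ t ⟨hst, le_rfl⟩] at h1
  linarith

/-! ### Growth of the rank-weighted sum -/

/-- The weight `R ^ (-i)` of the agent of rank `i` (counted from `0`, lowest first) among the `k` lowest
agents; the other ranks get weight `0`. -/
noncomputable def rankWeight (R : ℝ) (k i : ℕ) : ℝ := if i < k then R⁻¹ ^ i else 0

theorem rankWeight_nonneg {R : ℝ} (hR : 1 ≤ R) (k i : ℕ) : 0 ≤ rankWeight R k i := by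
  unfold rankWeight
  split_ifs
  · positivity
  · exact le_rfl

theorem rankWeight_succ {R : ℝ} (hR : 1 ≤ R) (k i : ℕ) :
    R * rankWeight R k (i + 1) ≤ rankWeight R k i := by
  have h0 := rankWeight_nonneg hR k i
  unfold rankWeight at *
  by_cases h : i + 1 < k
  · have h' : i < k := by omega
    simp only [h, h', if_true]
    rw [pow_succ]
    have : R * (R⁻¹ ^ i * R⁻¹) = R⁻¹ ^ i := by field_simp
    exact this.le
  · simpa [h] using h0

theorem rankWeight_antitone {R : ℝ} (hR : 1 ≤ R) (k : ℕ) : Antitone (rankWeight R k) := by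
  refine antitone_nat_of_succ_le fun i => ?_
  have h1 := rankWeight_succ hR k i
  have h2 := rankWeight_nonneg hR k (i + 1)
  nlinarith

/-- For a state `y` sorted increasingly and interactions `b` balanced up to a factor `R` on every cut,
the rank-weighted sum of the `l + 1` lowest entries grows at a rate controlled by the gap above rank
`l` and by the inflow into these entries. Writing `y` as a sum of gaps `d m`, the contribution of the
gap between ranks `m` and `m + 1` is at least `d m * (w m - R * w (m + 1))` times the inflow into the
ranks `≤ m`, which is nonnegative for all `m` and equals the claimed bound for `m = l`. -/
theorem rank_flow {n : ℕ} {b : Fin n → Fin n → ℝ} (hb : ∀ i j, 0 ≤ b i j) {y : Fin n → ℝ}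
    (hy : Monotone y) {R : ℝ} (hR : 1 ≤ R)
    (hbal : ∀ S : Finset (Fin n), ∑ i ∈ S, ∑ j ∈ Sᶜ, b j i ≤ R * ∑ i ∈ S, ∑ j ∈ Sᶜ, b i j)
    {l : ℕ} (hl : l + 1 < n) :
    R⁻¹ ^ l * ((y ⟨l + 1, hl⟩ - y ⟨l, by omega⟩) *
      ∑ i ∈ univ.filter (fun i : Fin n => (i : ℕ) < l + 1),
        ∑ j ∈ (univ.filter (fun i : Fin n => (i : ℕ) < l + 1))ᶜ, b i j) ≤
    ∑ i : Fin n, rankWeight R (l + 1) i * ∑ j, b i j * (y j - y i) := by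
  classical
  set w := rankWeight R (l + 1) with hw
  have hwa : Antitone w := rankWeight_antitone hR _
  have hw0 : ∀ i, 0 ≤ w i := rankWeight_nonneg hR _
  -- `Y` extends `y` to all of `ℕ` by its last value, so that the last gap `d (n - 1)` is zero
  let Y : ℕ → ℝ := fun m => y ⟨min m (n - 1), by omega⟩
  let d : ℕ → ℝ := fun m => Y (m + 1) - Y m
  have hY : ∀ i : Fin n, Y i = y i := by
    intro i
    have : min (i : ℕ) (n - 1) = i := by omega
    simp [Y, this]
  have hd : ∀ m, 0 ≤ d m := by
    intro m
    refine sub_nonneg.2 (hy ?_)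
    simp only [Fin.mk_le_mk]
    omega
  have htel : ∀ i : Fin n, y i = Y 0 + ∑ m ∈ range n, d m * (if m < (i : ℕ) then 1 else 0) := by
    intro i
    have h1 : ∑ m ∈ range n, d m * (if m < (i : ℕ) then 1 else 0) = ∑ m ∈ range i, d m := by
      simp only [mul_ite, mul_one, mul_zero]
      rw [← Finset.sum_filter]
      congr 1
      ext m
      simp only [mem_filter, mem_range]
      omega
    rw [h1, Finset.sum_range_sub, ← hY]
    ring
  -- `F m` is the inflow into the ranks `≤ m`; `c m` is the coefficient of the gap `d m`
  let F : ℕ → ℝ := fun m => ∑ i ∈ univ.filter (fun i : Fin n => (i : ℕ) < m + 1),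
        ∑ j ∈ (univ.filter (fun i : Fin n => (i : ℕ) < m + 1))ᶜ, b i j
  let c : ℕ → ℝ := fun m => ∑ i : Fin n, ∑ j : Fin n, w i * (b i j *
    ((if m < (j : ℕ) then 1 else 0) - (if m < (i : ℕ) then 1 else 0)))
  have hF0 : ∀ m, 0 ≤ F m := fun m => sum_nonneg fun i _ => sum_nonneg fun j _ => hb i j
  have hsum : ∑ i : Fin n, w i * ∑ j, b i j * (y j - y i) = ∑ m ∈ range n, d m * c m := by
    have h1 : ∀ i j : Fin n, y j - y i = ∑ m ∈ range n,
        d m * ((if m < (j : ℕ) then 1 else 0) - (if m < (i : ℕ) then 1 else 0)) := by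
      intro i j
      rw [htel j, htel i]
      simp only [mul_sub, sum_sub_distrib]
      ring
    simp only [h1, c, mul_sum]
    rw [sum_comm (s := range n)]
    refine sum_congr rfl fun i _ => ?_
    rw [sum_comm (s := range n)]
    refine sum_congr rfl fun j _ => sum_congr rfl fun m _ => ?_
    ring
  have hc : ∀ m, (w m - R * w (m + 1)) * F m ≤ c m := by
    intro m
    have h1 : w m * F m - w (m + 1) * ∑ i ∈ univ.filter (fun i : Fin n => (i : ℕ) < m + 1),
        ∑ j ∈ (univ.filter (fun i : Fin n => (i : ℕ) < m + 1))ᶜ, b j i ≤ c m := by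
      have e1 : F m = ∑ i : Fin n, ∑ j : Fin n,
          if (i : ℕ) < m + 1 ∧ ¬ (j : ℕ) < m + 1 then b i j else 0 := by
        simp only [F, compl_filter, sum_filter]
        refine sum_congr rfl fun i _ => ?_
        by_cases h : (i : ℕ) < m + 1 <;> simp [h]
      have e2 : ∑ i ∈ univ.filter (fun i : Fin n => (i : ℕ) < m + 1),
          ∑ j ∈ (univ.filter (fun i : Fin n => (i : ℕ) < m + 1))ᶜ, b j i =
          ∑ i : Fin n, ∑ j : Fin n,
          if (j : ℕ) < m + 1 ∧ ¬ (i : ℕ) < m + 1 then b i j else 0 := by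
        rw [sum_comm (s := univ) (t := univ)]
        simp only [compl_filter, sum_filter]
        refine sum_congr rfl fun i _ => ?_
        by_cases h : (i : ℕ) < m + 1 <;> simp [h]
      rw [e1, e2, mul_sum, mul_sum, ← sum_sub_distrib]
      refine sum_le_sum fun i _ => ?_
      rw [mul_sum, mul_sum, ← sum_sub_distrib]
      refine sum_le_sum fun j _ => ?_
      have hbij := hb i j
      by_cases hi : m < (i : ℕ) <;> by_cases hj : m < (j : ℕ)
      · have a1 : ¬ (i : ℕ) < m + 1 := by omega
        have a2 : ¬ (j : ℕ) < m + 1 := by omega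
        simp [hi, hj, a1, a2]
      · have a1 : ¬ (i : ℕ) < m + 1 := by omega
        have a2 : (j : ℕ) < m + 1 := by omega
        have := mul_le_mul_of_nonneg_right (hwa (show m + 1 ≤ (i : ℕ) by omega)) hbij
        simp [hi, hj, a1, a2]
        linarith
      · have a1 : (i : ℕ) < m + 1 := by omega
        have a2 : ¬ (j : ℕ) < m + 1 := by omega
        have := mul_le_mul_of_nonneg_right (hwa (show (i : ℕ) ≤ m by omega)) hbij
        simp [hi, hj, a1, a2]
        linarith
      · have a1 : (i : ℕ) < m + 1 := by omega
        have a2 : (j : ℕ) < m + 1 := by omega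
        simp [hi, hj, a1, a2]
    have h2 := mul_le_mul_of_nonneg_left
      (hbal (univ.filter (fun i : Fin n => (i : ℕ) < m + 1))) (hw0 (m + 1))
    simp only [F] at *
    linarith
  have hnn : ∀ m ∈ range n, 0 ≤ d m * c m := fun m _ =>
    mul_nonneg (hd m) (le_trans (mul_nonneg (sub_nonneg.2 (rankWeight_succ hR _ m)) (hF0 m)) (hc m))
  have hone := single_le_sum hnn (mem_range.2 (show l < n by omega))
  rw [hsum]
  refine le_trans ?_ hone
  have hwl : w l = R⁻¹ ^ l := by simp [hw, rankWeight]
  have hwl' : w (l + 1) = 0 := by simp [hw, rankWeight]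
  have hdl : d l = y ⟨l + 1, hl⟩ - y ⟨l, by omega⟩ := by
    rw [← hY, ← hY]
  have h3 := mul_le_mul_of_nonneg_left (hc l) (hd l)
  rw [hwl, hwl', hdl] at h3
  rw [hdl]
  simp only [F] at h3
  linarith

/-! ### Trajectories and cut weights -/

theorem IsWeight.ii {n : ℕ} {a : Fin n → Fin n → ℝ → ℝ} (ha : IsWeight n a) (i j : Fin n)
    (s t : ℝ) : IntervalIntegrable (a i j) volume s t :=
  ((ha i j).2.2 s).symm.trans ((ha i j).2.2 t)

/-- The total weight `∑_{i ∈ S, j ∉ S} a i j t` with which `S` is attracted by its complement at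
time `t`. -/
noncomputable def cutRate (n : ℕ) (a : Fin n → Fin n → ℝ → ℝ) (S : Finset (Fin n)) (t : ℝ) : ℝ :=
  ∑ i ∈ S, ∑ j ∈ Sᶜ, a i j t

theorem cutRate_nonneg {n : ℕ} {a : Fin n → Fin n → ℝ → ℝ} (ha : IsWeight n a)
    (S : Finset (Fin n)) (t : ℝ) : 0 ≤ cutRate n a S t :=
  sum_nonneg fun i _ => sum_nonneg fun j _ => (ha i j).1 t

theorem cutRate_ii {n : ℕ} {a : Fin n → Fin n → ℝ → ℝ} (ha : IsWeight n a)
    (S : Finset (Fin n)) (s t : ℝ) : IntervalIntegrable (cutRate n a S) volume s t := by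
  have h : cutRate n a S = ∑ i ∈ S, ∑ j ∈ Sᶜ, a i j := by
    ext u
    simp [cutRate]
  rw [h]
  exact IntervalIntegrable.sum _ fun i _ => IntervalIntegrable.sum _ fun j _ => ha.ii i j s t

theorem cutSum_eq {n : ℕ} {a : Fin n → Fin n → ℝ → ℝ} (ha : IsWeight n a)
    (S : Finset (Fin n)) (s t : ℝ) : cutSum n a S s t = ∫ u in s..t, cutRate n a S u := by
  unfold cutSum cutRate
  rw [intervalIntegral.integral_finsetSum]
  · refine sum_congr rfl fun i _ => ?_
    rw [intervalIntegral.integral_finsetSum fun j _ => ha.ii i j s t]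
  · intro i _
    have h : (fun u => ∑ j ∈ Sᶜ, a i j u) = ∑ j ∈ Sᶜ, a i j := by
      ext u
      simp
    rw [h]
    exact IntervalIntegrable.sum _ fun j _ => ha.ii i j s t

theorem IsTrajectory.ii {n : ℕ} {a : Fin n → Fin n → ℝ → ℝ} {x : ℝ → Fin n → ℝ}
    (hx : IsTrajectory n a x) (i : Fin n) {s t : ℝ} (hs : 0 ≤ s) (ht : 0 ≤ t) :
    IntervalIntegrable (fun u => ∑ j : Fin n, a i j u * (x u j - x u i)) volume s t :=
  (hx.2 i s hs).1.symm.trans (hx.2 i t ht).1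

theorem IsTrajectory.eq_add {n : ℕ} {a : Fin n → Fin n → ℝ → ℝ} {x : ℝ → Fin n → ℝ}
    (hx : IsTrajectory n a x) (i : Fin n) {s t : ℝ} (hs : 0 ≤ s) (ht : 0 ≤ t) :
    x t i = x s i + ∫ u in s..t, ∑ j : Fin n, a i j u * (x u j - x u i) := by
  rw [(hx.2 i t ht).2, (hx.2 i s hs).2, add_assoc,
    intervalIntegral.integral_add_adjacent_intervals (hx.2 i s hs).1 (hx.ii i hs ht)]

theorem IsTrajectory.affine {n : ℕ} {a : Fin n → Fin n → ℝ → ℝ} {x : ℝ → Fin n → ℝ}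
    (hx : IsTrajectory n a x) (α β : ℝ) : IsTrajectory n a (fun t i => α * x t i + β) := by
  have e : ∀ (i : Fin n) (s : ℝ), ∑ j : Fin n, a i j s * ((α * x s j + β) - (α * x s i + β)) =
      α * ∑ j : Fin n, a i j s * (x s j - x s i) := by
    intro i s
    rw [mul_sum]
    exact sum_congr rfl fun j _ => by ring
  refine ⟨fun i => (continuousOn_const.mul (hx.1 i)).add continuousOn_const, fun i t ht => ?_⟩
  simp only [e]
  refine ⟨(hx.2 i t ht).1.const_mul α, ?_⟩
  rw [intervalIntegral.integral_const_mul, (hx.2 i t ht).2]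
  ring

theorem IsTrajectory.lower_bound {n : ℕ} {a : Fin n → Fin n → ℝ → ℝ} (ha : IsWeight n a)
    {x : ℝ → Fin n → ℝ} (hx : IsTrajectory n a x) {s t m : ℝ} (hs : 0 ≤ s) (hst : s ≤ t)
    (hm : ∀ i, m ≤ x s i) (i : Fin n) : m ≤ x t i := by
  have h := min_growth (K := Fin n) hst (φ := fun i u => x u i)
    (g := fun i u => ∑ j : Fin n, a i j u * (x u j - x u i)) (D := fun _ => 0)
    (fun i u hu => hx.eq_add i hs (hs.trans hu.1)) (fun i => hx.ii i hs (hs.trans hst))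
    (by simp) (fun u _ => ?_) hm i
  · simpa using h
  · have : Nonempty (Fin n) := ⟨i⟩
    obtain ⟨k, hk⟩ := Finite.exists_min (x u)
    exact ⟨k, hk, sum_nonneg fun j _ => mul_nonneg ((ha k j).1 u) (sub_nonneg.2 (hk j))⟩

/-- An agent of `H`, all of whose members start above `ε` while everyone else is nonnegative, loses at
most `ε` times the weight attracting `H` to its complement. -/
theorem IsTrajectory.leak {n : ℕ} {a : Fin n → Fin n → ℝ → ℝ} (ha : IsWeight n a)
    {x : ℝ → Fin n → ℝ} (hx : IsTrajectory n a x) {s t ε : ℝ} (hs : 0 ≤ s) (hst : s ≤ t)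
    (hpos : ∀ i, 0 ≤ x s i) (hε : 0 ≤ ε) {H : Finset (Fin n)} (hH : ∀ i ∈ H, ε ≤ x s i)
    {i : Fin n} (hi : i ∈ H) : ε - ε * ∫ u in s..t, cutRate n a H u ≤ x t i := by
  classical
  -- adjoining the constant `ε` to the family caps the minimum over `H` at `ε`, so that each unit of
  -- weight pulls it down by at most `ε`
  have h := min_growth (K := Option H) hst (φ := fun κ u => κ.elim ε fun i => x u i)
    (g := fun κ u => κ.elim 0 fun i => ∑ j : Fin n, a i j u * (x u j - x u i))
    (D := fun u => -ε * cutRate n a H u) (m := ε) ?_ ?_ ((cutRate_ii ha H s t).const_mul _) ?_ ?_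
    (some ⟨i, hi⟩)
  · simp only [Option.elim_some, intervalIntegral.integral_const_mul] at h
    linarith
  · rintro (_ | k) u hu
    · simp
    · exact hx.eq_add k hs (hs.trans hu.1)
  · rintro (_ | k)
    · simp
    · exact hx.ii k hs (hs.trans hst)
  · intro u hu
    obtain ⟨κ, hκ⟩ := Finite.exists_min fun κ : Option H => κ.elim ε fun i => x u i
    refine ⟨κ, hκ, ?_⟩
    have hc := cutRate_nonneg ha H u
    rcases κ with _ | k
    · simp only [Option.elim_none]
      nlinarith
    · have h1 : x u k ≤ ε := hκ none
      have h2 : ∀ j ∈ H, x u k ≤ x u j := fun j hj => hκ (some ⟨j, hj⟩)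
      simp only [Option.elim_some]
      rw [← sum_add_sum_compl H]
      have h3 : 0 ≤ ∑ j ∈ H, a k j u * (x u j - x u k) :=
        sum_nonneg fun j hj => mul_nonneg ((ha k j).1 u) (sub_nonneg.2 (h2 j hj))
      have h4 : -ε * ∑ j ∈ Hᶜ, a k j u ≤ ∑ j ∈ Hᶜ, a k j u * (x u j - x u k) := by
        rw [mul_sum]
        refine sum_le_sum fun j _ => ?_
        have := hx.lower_bound ha hs hu.1 hpos j
        have := (ha k j).1 u
        nlinarith
      have h5 : ∑ j ∈ Hᶜ, a k j u ≤ cutRate n a H u :=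
        single_le_sum (f := fun i => ∑ j ∈ Hᶜ, a i j u)
          (fun i _ => sum_nonneg fun j _ => (ha i j).1 u) k.2
      nlinarith
  · rintro (_ | k)
    · simp
    · exact hH k k.2

/-- A continuous function that cannot reach the level `θ` for the first time stays above it. -/
theorem continuation {f : ℝ → ℝ} {s T θ : ℝ} (hf : ContinuousOn f (Set.Icc s T))
    (hs : θ < f s)
    (step : ∀ τ ∈ Set.Icc s T, (∀ u ∈ Set.Icc s τ, θ ≤ f u) → θ < f τ) :
    ∀ u ∈ Set.Icc s T, θ ≤ f u := by
  by_contra! hcon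
  obtain ⟨u, hu, hlt⟩ := hcon
  have ivt : ∀ v ∈ Set.Icc s T, f v < θ → ∃ r ∈ Set.Icc s v, f r = θ := fun v hv hlt =>
    intermediate_value_Icc' hv.1 (hf.mono (Set.Icc_subset_Icc_right hv.2)) ⟨hlt.le, hs.le⟩
  have hcomp : IsCompact (Set.Icc s T ∩ f ⁻¹' {θ}) :=
    isCompact_Icc.of_isClosed_subset
      (hf.preimage_isClosed_of_isClosed isClosed_Icc isClosed_singleton) Set.inter_subset_left
  obtain ⟨r, hr, hrθ⟩ := ivt u hu hlt
  obtain ⟨τ, ⟨hτ, hτθ⟩, hleast⟩ := hcomp.exists_isLeast ⟨r, ⟨hr.1, hr.2.trans hu.2⟩, hrθ⟩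
  have := step τ hτ fun v hv => by
    by_contra! hv'
    obtain ⟨r', hr', hrθ'⟩ := ivt v ⟨hv.1, hv.2.trans hτ.2⟩ hv'
    have h1 := hleast ⟨⟨hr'.1, hr'.2.trans (hv.2.trans hτ.2)⟩, hrθ'⟩
    have h2 : v = τ := le_antisymm hv.2 (h1.trans hr'.2)
    rw [h2] at hv'
    exact hv'.ne hτθ
  exact this.ne' hτθ

/-! ### Raising agents within one window -/

theorem sum_cut_perm {n : ℕ} (σ : Equiv.Perm (Fin n)) (f : Fin n → Fin n → ℝ)
    (S : Finset (Fin n)) :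
    ∑ i ∈ S, ∑ j ∈ Sᶜ, f (σ i) (σ j) =
      ∑ i ∈ S.map σ.toEmbedding, ∑ j ∈ (S.map σ.toEmbedding)ᶜ, f i j := by
  have h : (S.map σ.toEmbedding)ᶜ = Sᶜ.map σ.toEmbedding := by
    ext i
    simp
  rw [h, sum_map]
  refine sum_congr rfl fun i _ => ?_
  rw [sum_map]
  rfl

/-- The sum is `q + q ^ 2 + ⋯ + q ^ m`. -/
theorem geom_sum_bound {q : ℝ} (h0 : 0 ≤ q) (hq : q ≤ 1 / 16) (m : ℕ) :
    ∑ i ∈ range m, q ^ (m - i) ≤ 1 / 15 := by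
  induction m with
  | zero => norm_num
  | succ m ih =>
    rw [sum_range_succ]
    have h : ∑ i ∈ range m, q ^ (m + 1 - i) = q * ∑ i ∈ range m, q ^ (m - i) := by
      rw [mul_sum]
      refine sum_congr rfl fun i hi => ?_
      rw [← pow_succ']
      congr 1
      have := mem_range.1 hi
      omega
    rw [h]
    have h2 : m + 1 - m = 1 := by omega
    rw [h2, pow_one]
    nlinarith

/-- Suppose that on `[s, τ]` the agents of `H` stay above `ε / 2` and that none of the levels
`c ^ q * ε` with `q ≥ 1` is reached by `q` agents more than the cardinality of `H`. Then the low agents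
`Hᶜ` receive little weight from `H`: the rank-weighted sum of their positions, which is
nonnegative at time `s`, is at most `R ^ (-(l + 1)) * ε / 15` at time `τ`, while it grows at rate at
least `R ^ (-l) * (ε / 2 - c * ε)` times the inflow. -/
theorem inflow_bound {n : ℕ} (hn : 2 ≤ n) {a : Fin n → Fin n → ℝ → ℝ} (ha : IsWeight n a)
    {x : ℝ → Fin n → ℝ} (hx : IsTrajectory n a x) {s τ R ε : ℝ} (hs : 0 ≤ s) (hsτ : s ≤ τ)
    (hR : 1 ≤ R)
    (hbal : ∀ u ∈ Set.Icc s τ, ∀ S : Finset (Fin n), cutRate n a Sᶜ u ≤ R * cutRate n a S u)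
    (hpos : ∀ i, 0 ≤ x s i) (hε : 0 < ε) {l : ℕ} (hl : l + 1 < n) {H : Finset (Fin n)}
    (hHc : H.card = n - (l + 1))
    (hcon : ∀ u ∈ Set.Icc s τ, ∀ q, 1 ≤ q → q ≤ l + 1 → ∀ S : Finset (Fin n),
      S.card = n - (l + 1) + q → ∃ i ∈ S, x u i < (1 / (4 * (n : ℝ) ^ 2 * R)) ^ q * ε)
    (hH : ∀ u ∈ Set.Icc s τ, ∀ i ∈ H, ε / 2 ≤ x u i) :
    R * ∫ u in s..τ, cutRate n a Hᶜ u ≤ 1 / 4 := by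
  classical
  set c : ℝ := 1 / (4 * (n : ℝ) ^ 2 * R) with hc
  have hn' : (2 : ℝ) ≤ n := by exact_mod_cast hn
  have hn16 : (16 : ℝ) ≤ 4 * (n : ℝ) ^ 2 := by nlinarith
  have hR0 : 0 < R := by linarith
  have hcpos : 0 < c := by positivity
  have hc16 : c ≤ 1 / 16 := by
    rw [hc]
    apply one_div_le_one_div_of_le (by norm_num)
    nlinarith
  -- the increasing rearrangement of the state lies strictly below the staircase of levels
  have hlow : ∀ u ∈ Set.Icc s τ, ∀ i : Fin n, (i : ℕ) < l + 1 →
      x u (Tuple.sort (x u) i) < c ^ (l + 1 - (i : ℕ)) * ε := by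
    intro u hu i hi
    obtain ⟨j, hj, hlt⟩ := hcon u hu (l + 1 - i) (by omega) (by omega)
      ((Finset.Ici i).map (Tuple.sort (x u)).toEmbedding) (by
        rw [card_map, Fin.card_Ici]
        omega)
    obtain ⟨r, hr, rfl⟩ := mem_map.1 hj
    exact lt_of_le_of_lt (Tuple.monotone_sort (x u) (mem_Ici.1 hr)) hlt
  -- hence the `l + 1` lowest agents are always the members of `Hᶜ`
  have hset : ∀ u ∈ Set.Icc s τ, (univ.filter fun i : Fin n => (i : ℕ) < l + 1).map
      (Tuple.sort (x u)).toEmbedding = Hᶜ := by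
    intro u hu
    refine Finset.eq_of_subset_of_card_le ?_ ?_
    · intro j hj
      obtain ⟨i, hi, rfl⟩ := mem_map.1 hj
      have hi' : (i : ℕ) < l + 1 := (mem_filter.1 hi).2
      rw [mem_compl]
      intro hmem
      have h1 := hH u hu _ hmem
      have h2 := hlow u hu i hi'
      have h3 : c ^ (l + 1 - (i : ℕ)) ≤ c :=
        pow_le_of_le_one hcpos.le (by linarith) (by omega)
      have h4 : c ^ (l + 1 - (i : ℕ)) * ε ≤ 1 / 16 * ε := by
        apply mul_le_mul_of_nonneg_right (h3.trans hc16) hε.le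
      have h5 : x u (Tuple.sort (x u) i) < ε / 2 := by linarith
      exact absurd h1 (not_le.2 h5)
    · rw [card_map, card_compl, Fintype.card_fin, hHc]
      have : (univ.filter fun i : Fin n => (i : ℕ) < l + 1).card = l + 1 := by
        rw [Fin.card_filter_val_lt]
        omega
      omega
  have hgrow := min_growth (K := Equiv.Perm (Fin n)) hsτ
    (φ := fun σ u => ∑ i : Fin n, rankWeight R (l + 1) i * x u (σ i))
    (g := fun σ u => ∑ i : Fin n, rankWeight R (l + 1) i *
      ∑ j, a (σ i) j u * (x u j - x u (σ i)))
    (D := fun u => R⁻¹ ^ l * ((ε / 2 - c * ε) * cutRate n a Hᶜ u)) (m := 0)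
    ?_ ?_ (((cutRate_ii ha _ s τ).const_mul _).const_mul _) ?_ ?_ (Tuple.sort (x τ))
  · have hτ : τ ∈ Set.Icc s τ := ⟨hsτ, le_rfl⟩
    have hup : ∑ i : Fin n, rankWeight R (l + 1) i * x τ (Tuple.sort (x τ) i) ≤
        R⁻¹ ^ (l + 1) * (ε * (1 / 15)) := by
      have h1 : ∀ i : Fin n, rankWeight R (l + 1) i * x τ (Tuple.sort (x τ) i) ≤
          (fun i : ℕ => if i < l + 1 then
            R⁻¹ ^ (l + 1) * (ε * (1 / (4 * (n : ℝ) ^ 2)) ^ (l + 1 - i)) else 0) i := by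
        intro i
        unfold rankWeight
        by_cases hi : (i : ℕ) < l + 1
        · simp only [hi, if_true]
          have h2 := mul_le_mul_of_nonneg_left (hlow τ hτ i hi).le
            (show 0 ≤ R⁻¹ ^ (i : ℕ) by positivity)
          refine h2.trans (le_of_eq ?_)
          have h3 : c = R⁻¹ * (1 / (4 * (n : ℝ) ^ 2)) := by
            rw [hc]
            field_simp
          have h4 : R⁻¹ ^ (l + 1) = R⁻¹ ^ (i : ℕ) * R⁻¹ ^ (l + 1 - (i : ℕ)) := by
            rw [← pow_add]
            congr 1
            omega
          rw [h3, mul_pow, h4]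
          ring
        · simp [hi]
      refine (sum_le_sum fun i _ => h1 i).trans ?_
      rw [Fin.sum_univ_eq_sum_range (fun i : ℕ => if i < l + 1 then
            R⁻¹ ^ (l + 1) * (ε * (1 / (4 * (n : ℝ) ^ 2)) ^ (l + 1 - i)) else 0) n, ← sum_filter]
      have h5 : (range n).filter (fun i => i < l + 1) = range (l + 1) := by
        ext i
        simp only [mem_filter, mem_range]
        omega
      rw [h5, ← mul_sum, ← mul_sum]
      have h6 := geom_sum_bound (q := 1 / (4 * (n : ℝ) ^ 2)) (by positivity)
        (one_div_le_one_div_of_le (by norm_num) hn16) (l + 1)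
      gcongr
    have h7 := hgrow.trans hup
    rw [intervalIntegral.integral_const_mul, intervalIntegral.integral_const_mul, pow_succ,
      zero_add, mul_assoc] at h7
    have h8 := le_of_mul_le_mul_left h7 (show 0 < R⁻¹ ^ l by positivity)
    have h9 : 0 ≤ ∫ u in s..τ, cutRate n a Hᶜ u :=
      intervalIntegral.integral_nonneg hsτ fun u _ => cutRate_nonneg ha _ u
    set I := ∫ u in s..τ, cutRate n a Hᶜ u
    have h10 : R * ((ε / 2 - c * ε) * I) ≤ ε * (1 / 15) := by
      have := mul_le_mul_of_nonneg_left h8 hR0.le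
      rwa [mul_inv_cancel_left₀ hR0.ne'] at this
    have h11 : ε * (7 / 16) * (R * I) ≤ ε * (1 / 15) := by
      have : 0 ≤ R * I := by positivity
      have h12 : ε * (7 / 16) ≤ ε / 2 - c * ε := by nlinarith
      have := mul_le_mul_of_nonneg_right h12 this
      linarith
    have h13 : 7 / 16 * (R * I) ≤ 1 / 15 := by
      rw [mul_assoc] at h11
      exact le_of_mul_le_mul_left h11 hε
    linarith
  · intro σ u hu
    rw [intervalIntegral.integral_finsetSum]
    · rw [← sum_add_distrib]
      refine sum_congr rfl fun i _ => ?_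
      rw [intervalIntegral.integral_const_mul, ← mul_add,
        ← hx.eq_add (σ i) hs (hs.trans hu.1)]
    · exact fun i _ => (hx.ii (σ i) hs (hs.trans hu.1)).const_mul _
  · intro σ
    have h : (fun u => ∑ i : Fin n, rankWeight R (l + 1) i *
        ∑ j, a (σ i) j u * (x u j - x u (σ i))) =
        ∑ i : Fin n, fun u => rankWeight R (l + 1) i *
        ∑ j, a (σ i) j u * (x u j - x u (σ i)) := by
      ext u
      simp
    simp only [h]
    exact IntervalIntegrable.sum _ fun i _ => (hx.ii (σ i) hs (hs.trans hsτ)).const_mul _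
  · intro u hu
    refine ⟨Tuple.sort (x u), fun σ => ?_, ?_⟩
    -- the sorting permutation is minimal by the rearrangement inequality
    · have hanti : Antivary (fun i : Fin n => rankWeight R (l + 1) i)
          (fun i => x u (Tuple.sort (x u) i)) := by
        apply Antitone.antivary
        · exact fun i j hij => rankWeight_antitone hR _ hij
        · exact Tuple.monotone_sort (x u)
      have := hanti.sum_mul_le_sum_mul_comp_perm (σ := σ.trans (Tuple.sort (x u)).symm)
      simpa using this
    · set σ := Tuple.sort (x u) with hσ
      have hflow := rank_flow (b := fun i j => a (σ i) (σ j) u) (y := fun i => x u (σ i))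
        (fun i j => (ha _ _).1 u) (Tuple.monotone_sort (x u)) hR ?_ hl
      · rw [sum_cut_perm σ (fun i j => a i j u), hset u hu] at hflow
        have hre : ∀ i : Fin n, ∑ j, a (σ i) (σ j) u * (x u (σ j) - x u (σ i)) =
            ∑ j, a (σ i) j u * (x u j - x u (σ i)) := fun i =>
          Equiv.sum_comp σ fun j => a (σ i) j u * (x u j - x u (σ i))
        simp only [hre] at hflow
        refine le_trans ?_ hflow
        have hgap : ε / 2 - c * ε ≤ x u (σ ⟨l + 1, hl⟩) - x u (σ ⟨l, by omega⟩) := by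
          have h1 : x u (σ ⟨l, by omega⟩) < c * ε := by
            simpa using hlow u hu ⟨l, by omega⟩ (by simp)
          have h2 : σ ⟨l + 1, hl⟩ ∈ H := by
            by_contra hnot
            rw [← mem_compl, ← hset u hu] at hnot
            simp [hσ] at hnot
          have := hH u hu _ h2
          linarith
        have := cutRate_nonneg ha Hᶜ u
        exact mul_le_mul_of_nonneg_left (mul_le_mul_of_nonneg_right hgap this) (by positivity)
      · intro S
        have h1 := hbal u hu (S.map σ.toEmbedding)
        have h2 := sum_cut_perm σ (fun i j => a j i u) S
        have h3 := sum_cut_perm σ (fun i j => a i j u) S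
        rw [h2, h3, sum_comm]
        simpa [cutRate] using h1
  · intro σ
    exact sum_nonneg fun i _ => mul_nonneg (rankWeight_nonneg hR _ _) (hpos _)

/-- If `n - k` agents are above `ε`, with `k = l + 1`, and every cut accumulates weight at least `1`, then
for some `q ≥ 1` the level `c ^ q * ε` is reached by `q` further agents at a common time. -/
theorem advance {n : ℕ} (hn : 2 ≤ n) {a : Fin n → Fin n → ℝ → ℝ} (ha : IsWeight n a)
    {x : ℝ → Fin n → ℝ} (hx : IsTrajectory n a x) {s T R ε : ℝ} (hs : 0 ≤ s) (hsT : s ≤ T)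
    (hR : 1 ≤ R)
    (hbal : ∀ u ∈ Set.Icc s T, ∀ S : Finset (Fin n), cutRate n a Sᶜ u ≤ R * cutRate n a S u)
    (hcut : ∀ S : Finset (Fin n), S.Nonempty → S ≠ univ → 1 ≤ ∫ u in s..T, cutRate n a S u)
    (hpos : ∀ i, 0 ≤ x s i) (hε : 0 < ε) {l : ℕ} (hl : l + 1 < n) {H : Finset (Fin n)}
    (hHc : H.card = n - (l + 1)) (hH : ∀ i ∈ H, ε ≤ x s i) :
    ∃ u ∈ Set.Icc s T, ∃ q, 1 ≤ q ∧ q ≤ l + 1 ∧ ∃ S : Finset (Fin n),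
      S.card = n - (l + 1) + q ∧ ∀ i ∈ S, (1 / (4 * (n : ℝ) ^ 2 * R)) ^ q * ε ≤ x u i := by
  by_contra! hcon
  have hHne : H.Nonempty := by
    rw [← card_pos]
    omega
  have hest : ∀ τ ∈ Set.Icc s T, (∀ u ∈ Set.Icc s τ, ∀ i ∈ H, ε / 2 ≤ x u i) →
      R * ∫ u in s..τ, cutRate n a Hᶜ u ≤ 1 / 4 := fun τ hτ h =>
    inflow_bound hn ha hx hs hτ.1 hR (fun u hu => hbal u ⟨hu.1, hu.2.trans hτ.2⟩) hpos hε hl hHc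
      (fun u hu => hcon u ⟨hu.1, hu.2.trans hτ.2⟩) h
  have hstay : ∀ u ∈ Set.Icc s T, ε / 2 ≤ H.inf' hHne (fun i => x u i) := by
    refine continuation ?_ ?_ ?_
    · refine ContinuousOn.finset_inf'_apply hHne fun i _ => (hx.1 i).mono ?_
      exact fun u hu => hs.trans hu.1
    · exact lt_of_lt_of_le (by linarith) (le_inf' _ _ hH)
    · intro τ hτ hist
      have h1 := hest τ hτ fun u hu i hi => (hist u hu).trans (inf'_le _ hi)
      have h2 : ∫ u in s..τ, cutRate n a H u ≤ R * ∫ u in s..τ, cutRate n a Hᶜ u := by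
        rw [← intervalIntegral.integral_const_mul]
        refine intervalIntegral.integral_mono_on hτ.1 (cutRate_ii ha _ _ _)
          ((cutRate_ii ha _ _ _).const_mul _) fun u hu => ?_
        simpa using hbal u ⟨hu.1, hu.2.trans hτ.2⟩ Hᶜ
      refine (lt_inf'_iff _).2 fun i hi => ?_
      have h3 := hx.leak ha hs hτ.1 hpos hε.le hH hi
      nlinarith
  have h1 := hest T ⟨hsT, le_rfl⟩ fun u hu i hi => (hstay u hu).trans (inf'_le _ hi)
  have h2 := hcut Hᶜ (by
    rw [← card_pos, card_compl, Fintype.card_fin]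
    omega) (by
    intro h
    rw [compl_eq_univ_iff] at h
    exact hHne.ne_empty h)
  nlinarith

/-! ### Rescaling times and the cut-balance constant -/

theorem cutSum_continuous {n : ℕ} {a : Fin n → Fin n → ℝ → ℝ} (ha : IsWeight n a)
    (S : Finset (Fin n)) (t0 : ℝ) : Continuous (fun t => cutSum n a S t0 t) := by
  simp only [cutSum_eq ha]
  exact intervalIntegral.continuous_primitive (fun s t => cutRate_ii ha S s t) t0

theorem properCuts_nonempty {n : ℕ} (hn : 2 ≤ n) :
    (univ.filter fun S : Finset (Fin n) => S.Nonempty ∧ S ≠ univ).Nonempty := by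
  refine ⟨{⟨0, by omega⟩}, mem_filter.2 ⟨mem_univ _, singleton_nonempty _, fun h => ?_⟩⟩
  have := congrArg Finset.card h
  simp at this
  omega

/-- For `n ≥ 2` there is a proper cut, so the infimum defining `minCut` is an honest minimum. -/
theorem minCut_eq_inf' {n : ℕ} (hn : 2 ≤ n) (a : Fin n → Fin n → ℝ → ℝ) (t0 t : ℝ) :
    minCut n a t0 t = (univ.filter fun S : Finset (Fin n) => S.Nonempty ∧ S ≠ univ).inf'
      (properCuts_nonempty hn) (fun S => cutSum n a S t0 t) := by
  rw [inf'_eq_csInf_image, minCut]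
  simp

/-- Strong connectivity forces a persistent edge into every nonempty proper subset. -/
theorem exists_persistent_edge {n : ℕ} {a : Fin n → Fin n → ℝ → ℝ} (hconn : PersistentConn n a)
    {S : Finset (Fin n)} (hS : S.Nonempty) (hS' : S ≠ univ) :
    ∃ i ∈ S, ∃ j ∈ Sᶜ, ∫⁻ s in Set.Ioi (0:ℝ), ENNReal.ofReal (a i j s) = ⊤ := by
  obtain ⟨v, hv⟩ := hS
  obtain ⟨u, hu⟩ : ∃ u, u ∉ S := by
    by_contra! h
    exact hS' (eq_univ_of_forall h)
  by_contra! hcon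
  have : ∀ w, Relation.ReflTransGen
      (fun j i => ∫⁻ s in Set.Ioi (0:ℝ), ENNReal.ofReal (a i j s) = ⊤) u w → w ∉ S := by
    intro w hw
    induction hw with
    | refl => exact hu
    | tail _ hstep ih => exact fun hmem => hcon _ hmem _ (mem_compl.2 ih) hstep
  exact this v (hconn u v) hv

theorem eventually_one_le_cutSum {n : ℕ} {a : Fin n → Fin n → ℝ → ℝ} (ha : IsWeight n a)
    (hconn : PersistentConn n a) {S : Finset (Fin n)} (hS : S.Nonempty) (hS' : S ≠ univ) (t0 : ℝ) :
    ∀ᶠ t in atTop, 1 ≤ cutSum n a S t0 t := by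
  obtain ⟨i, hi, j, hj, htop⟩ := exists_persistent_edge hconn hS hS'
  have hex : ∃ t ≥ t0, 1 ≤ ∫ s in t0..t, a i j s := by
    by_contra! hcon
    have hio : IntegrableOn (a i j) (Set.Ioi t0) := by
      refine integrableOn_Ioi_of_intervalIntegral_norm_bounded (b := id) (l := atTop) 1 t0
        (fun t => ?_) tendsto_id ?_
      · exact (ha.ii i j t0 (max t0 t)).1.mono_set (Set.Ioc_subset_Ioc_right (le_max_right _ _))
      · filter_upwards [eventually_ge_atTop t0] with t ht
        simp only [id, Real.norm_eq_abs, abs_of_nonneg ((ha i j).1 _)]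
        exact (hcon t ht).le
    have hio' : IntegrableOn (a i j) (Set.Ioi 0) := by
      have h1 : IntegrableOn (a i j) (Set.Ioc 0 (max 0 t0)) := (ha.ii i j 0 (max 0 t0)).1
      refine (h1.union hio).mono_set fun u hu => ?_
      by_cases h : t0 < u
      · exact Or.inr h
      · exact Or.inl ⟨hu, (not_lt.1 h).trans (le_max_right _ _)⟩
    exact (hio'.lintegral_lt_top).ne htop
  obtain ⟨t1, ht1, h1⟩ := hex
  filter_upwards [eventually_ge_atTop t1] with t ht
  have hmono : ∫ s in t0..t1, a i j s ≤ ∫ s in t0..t, a i j s :=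
    intervalIntegral.integral_mono_interval le_rfl ht1 ht
      (Filter.Eventually.of_forall fun u => (ha i j).1 u) (ha.ii i j _ _)
  have hnn : ∀ i j, 0 ≤ ∫ s in t0..t, a i j s := fun i j =>
    intervalIntegral.integral_nonneg (ht1.trans ht) fun u _ => (ha i j).1 u
  calc (1 : ℝ) ≤ ∫ s in t0..t, a i j s := h1.trans hmono
    _ ≤ ∑ j ∈ Sᶜ, ∫ s in t0..t, a i j s :=
      single_le_sum (f := fun j => ∫ s in t0..t, a i j s) (fun j _ => hnn i j) hj
    _ ≤ cutSum n a S t0 t :=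
      single_le_sum (f := fun i => ∑ j ∈ Sᶜ, ∫ s in t0..t, a i j s)
        (fun i _ => sum_nonneg fun j _ => hnn i j) hi

/-- Under persistent connectivity `minCut` is continuous, starts at `0` and eventually exceeds `1`, so
the infimum defining `nextTime` is attained. -/
theorem nextTime_spec {n : ℕ} (hn : 2 ≤ n) {a : Fin n → Fin n → ℝ → ℝ} (ha : IsWeight n a)
    (hconn : PersistentConn n a) (t0 : ℝ) :
    t0 ≤ nextTime n a t0 ∧ minCut n a t0 (nextTime n a t0) = 1 := by
  have hcont : Continuous (fun t => minCut n a t0 t) := by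
    simp only [minCut_eq_inf' hn]
    exact Continuous.finset_inf'_apply _ fun S _ => cutSum_continuous ha S t0
  have hzero : minCut n a t0 t0 = 0 := by
    rw [minCut_eq_inf' hn]
    simp [cutSum]
  have hev : ∀ᶠ t in atTop, 1 ≤ minCut n a t0 t := by
    have : ∀ᶠ t in atTop, ∀ S : Finset (Fin n), S.Nonempty ∧ S ≠ univ → 1 ≤ cutSum n a S t0 t :=
      Filter.eventually_all.2 fun S => by
        by_cases h : S.Nonempty ∧ S ≠ univ
        · filter_upwards [eventually_one_le_cutSum ha hconn h.1 h.2 t0] with t ht _ using ht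
        · exact Filter.Eventually.of_forall fun t h' => absurd h' h
    filter_upwards [this] with t ht
    rw [minCut_eq_inf' hn]
    exact le_inf' _ _ fun S hS => ht S (mem_filter.1 hS).2
  obtain ⟨t1, h1, ht1⟩ := (hev.and (eventually_ge_atTop t0)).exists
  obtain ⟨t, ht, htt⟩ := intermediate_value_Icc ht1 hcont.continuousOn
    (show (1 : ℝ) ∈ Set.Icc _ _ from ⟨by simp [hzero], h1⟩)
  have hclosed : IsClosed {t : ℝ | t0 ≤ t ∧ minCut n a t0 t = 1} :=
    isClosed_Ici.inter (isClosed_singleton.preimage hcont)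
  exact hclosed.csInf_mem ⟨t, ht.1, htt⟩ ⟨t0, fun u hu => hu.1⟩

/-- When finite, `𝐫(T)` is a cut-balance constant on `[0, T]`; for improper cuts both sides vanish. -/
theorem cutRate_le_of_rbold {n : ℕ} {a : Fin n → Fin n → ℝ → ℝ} (ha : IsWeight n a) {T : ℝ}
    (hfin : rbold n a T ≠ ⊤) {u : ℝ} (hu : u ∈ Set.Icc 0 T) (S : Finset (Fin n)) :
    cutRate n a Sᶜ u ≤ (rbold n a T).toReal * cutRate n a S u := by
  have hrev : ∑ i ∈ Sᶜ, ∑ j ∈ Sᶜᶜ, a j i u = cutRate n a S u := by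
    rw [compl_compl, sum_comm]
    rfl
  have h0 := cutRate_nonneg ha Sᶜ u
  have h0' := cutRate_nonneg ha S u
  by_cases hS : Sᶜ.Nonempty ∧ Sᶜ ≠ univ
  · have hle : rS n a Sᶜ u ≤ rbold n a T :=
      (le_iSup₂_of_le (f := fun S (_ : S ∈ {S : Finset (Fin n) | S.Nonempty ∧ S ≠ univ}) =>
        rS n a S u) Sᶜ hS le_rfl).trans
        (le_iSup₂_of_le (f := fun s (_ : s ∈ Set.Icc (0:ℝ) T) => rmax n a s) u hu le_rfl)
    unfold rS at hle
    rw [hrev] at hle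
    change (if 0 < cutRate n a S u then ENNReal.ofReal (cutRate n a Sᶜ u / cutRate n a S u)
      else if cutRate n a Sᶜ u = 0 then 1 else ⊤) ≤ _ at hle
    split_ifs at hle with h1 h2
    · have := (ENNReal.ofReal_le_iff_le_toReal hfin).1 hle
      rwa [div_le_iff₀ h1] at this
    · rw [h2]
      positivity
    · exact absurd (top_le_iff.1 hle) hfin
  · have : cutRate n a Sᶜ u = 0 := by
      rcases not_and_or.1 hS with h | h
      · rw [not_nonempty_iff_eq_empty.1 h]
        simp [cutRate]
      · rw [not_not.1 h]
        simp [cutRate]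
    rw [this]
    positivity

/-- The ratios of a cut and of its complement are mutually inverse, so one of them is at least `1`; if
both weights vanish the ratio is `1` by convention. -/
theorem one_le_rbold {n : ℕ} (hn : 2 ≤ n) {a : Fin n → Fin n → ℝ → ℝ} (ha : IsWeight n a) {T : ℝ}
    (hT : 0 ≤ T) (hfin : rbold n a T ≠ ⊤) : 1 ≤ (rbold n a T).toReal := by
  obtain ⟨S, hS⟩ := properCuts_nonempty hn
  have hu : (0 : ℝ) ∈ Set.Icc 0 T := ⟨le_rfl, hT⟩
  have h1 := cutRate_le_of_rbold ha hfin hu S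
  have h2 := cutRate_le_of_rbold ha hfin hu Sᶜ
  rw [compl_compl] at h2
  have p1 := cutRate_nonneg ha S 0
  have p2 := cutRate_nonneg ha Sᶜ 0
  by_cases h : cutRate n a S 0 + cutRate n a Sᶜ 0 = 0
  · have z1 : cutRate n a S 0 = 0 := by linarith
    have z2 : cutRate n a Sᶜ 0 = 0 := by linarith
    have hle : rS n a S 0 ≤ rbold n a T :=
      (le_iSup₂_of_le (f := fun S (_ : S ∈ {S : Finset (Fin n) | S.Nonempty ∧ S ≠ univ}) =>
        rS n a S 0) S (mem_filter.1 hS).2 le_rfl).trans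
        (le_iSup₂_of_le (f := fun s (_ : s ∈ Set.Icc (0:ℝ) T) => rmax n a s) 0 hu le_rfl)
    have hrev : ∑ i ∈ S, ∑ j ∈ Sᶜ, a j i 0 = 0 := by
      have h := z2
      unfold cutRate at h
      rw [compl_compl] at h
      rw [sum_comm]
      exact h
    unfold rS at hle
    rw [hrev] at hle
    change (if (0 : ℝ) < 0 then _ else if cutRate n a S 0 = 0 then 1 else ⊤) ≤ _ at hle
    simp only [lt_irrefl, if_false, z1, if_true] at hle
    simpa using ENNReal.toReal_mono hfin hle
  · have hpos : 0 < cutRate n a S 0 + cutRate n a Sᶜ 0 := lt_of_le_of_ne (by linarith) (Ne.symm h)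
    by_contra! hlt
    nlinarith

/-- Over `⌊n/2⌋` windows at most `⌊n/2⌋` agents have to be raised. After `q` windows at most `⌊n/2⌋ - q`
agents remain to be raised, and each raised agent has cost one factor `c = 1 / (4 n² R)`. -/
theorem windows {n : ℕ} (hn : 2 ≤ n) {a : Fin n → Fin n → ℝ → ℝ} (ha : IsWeight n a)
    {x : ℝ → Fin n → ℝ} (hx : IsTrajectory n a x) (hconn : PersistentConn n a)
    {s R ε : ℝ} (hs : 0 ≤ s) (hR : 1 ≤ R)
    (hbal : ∀ u ∈ Set.Icc s ((nextTime n a)^[n / 2] s), ∀ S : Finset (Fin n),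
      cutRate n a Sᶜ u ≤ R * cutRate n a S u)
    (hpos : ∀ i, 0 ≤ x s i) (hε : 0 < ε) {H : Finset (Fin n)} (hHc : n - n / 2 ≤ H.card)
    (hH : ∀ i ∈ H, ε ≤ x s i) (i : Fin n) :
    (1 / (4 * (n : ℝ) ^ 2 * R)) ^ (n / 2) * ε ≤ x ((nextTime n a)^[n / 2] s) i := by
  set c : ℝ := 1 / (4 * (n : ℝ) ^ 2 * R) with hc
  have hn' : (0 : ℝ) < n := by
    have : 0 < n := by omega
    exact_mod_cast this
  have hcpos : 0 < c := by positivity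
  have hmono : Monotone (fun q => (nextTime n a)^[q] s) := by
    refine monotone_nat_of_le_succ fun q => ?_
    simp only [Function.iterate_succ_apply']
    exact (nextTime_spec hn ha hconn _).1
  have hind : ∀ q ≤ n / 2, ∃ u ∈ Set.Icc s ((nextTime n a)^[q] s), ∃ k ≤ n / 2 - q,
      ∃ S : Finset (Fin n), S.card = n - k ∧ ∀ i ∈ S, c ^ (n / 2 - k) * ε ≤ x u i := by
    intro q
    induction q with
    | zero =>
      intro _
      obtain ⟨S, hSH, hS⟩ := exists_subset_card_eq hHc
      exact ⟨s, by simp, n / 2, by simp, S, hS, fun i hi => by simpa using hH i (hSH hi)⟩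
    | succ q ih =>
      intro hq
      obtain ⟨u, hu, k, hk, S, hSc, hS⟩ := ih (by omega)
      have hstep : (nextTime n a)^[q] s ≤ (nextTime n a)^[q + 1] s := hmono (Nat.le_succ q)
      by_cases hk' : k ≤ n / 2 - (q + 1)
      · exact ⟨u, ⟨hu.1, hu.2.trans hstep⟩, k, hk', S, hSc, hS⟩
      · obtain ⟨l, rfl⟩ : ∃ l, k = l + 1 := ⟨k - 1, by omega⟩
        have hu0 : 0 ≤ u := hs.trans hu.1
        have hlast : (nextTime n a)^[q + 1] s ≤ (nextTime n a)^[n / 2] s := hmono hq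
        have hcut : ∀ C : Finset (Fin n), C.Nonempty → C ≠ univ →
            1 ≤ ∫ v in u..(nextTime n a)^[q + 1] s, cutRate n a C v := by
          intro C hC hC'
          have hspec := (nextTime_spec hn ha hconn ((nextTime n a)^[q] s)).2
          rw [← Function.iterate_succ_apply' (nextTime n a), minCut_eq_inf' hn] at hspec
          have h1 : 1 ≤ cutSum n a C ((nextTime n a)^[q] s) ((nextTime n a)^[q + 1] s) := by
            rw [← hspec]
            exact inf'_le (fun S => cutSum n a S ((nextTime n a)^[q] s) ((nextTime n a)^[q + 1] s))
              (mem_filter.2 ⟨mem_univ _, hC, hC'⟩)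
          rw [cutSum_eq ha] at h1
          exact h1.trans (intervalIntegral.integral_mono_interval hu.2 hstep le_rfl
            (Filter.Eventually.of_forall fun v => cutRate_nonneg ha C v) (cutRate_ii ha _ _ _))
        obtain ⟨v, hv, r, hr1, hr2, S', hSc', hS'⟩ := advance hn ha hx (s := u)
          (T := (nextTime n a)^[q + 1] s) hu0 (hu.2.trans hstep) hR
          (fun v hv => hbal v ⟨hu.1.trans hv.1, hv.2.trans hlast⟩) hcut
          (hx.lower_bound ha hs hu.1 hpos) (show 0 < c ^ (n / 2 - (l + 1)) * ε by positivity)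
          (by omega) hSc hS
        refine ⟨v, ⟨hu.1.trans hv.1, hv.2⟩, l + 1 - r, by omega, S', by omega, fun i hi => ?_⟩
        have h1 := hS' i hi
        rw [← mul_assoc, ← pow_add] at h1
        have h2 : n / 2 - (l + 1 - r) = r + (n / 2 - (l + 1)) := by omega
        rw [h2]
        exact h1
  obtain ⟨u, hu, k, hk, S, hSc, hS⟩ := hind (n / 2) le_rfl
  obtain rfl : k = 0 := by omega
  have hSu : S = univ := by
    rw [← card_eq_iff_eq_univ, Fintype.card_fin]
    omega
  refine hx.lower_bound ha (hs.trans hu.1) hu.2 (fun j => ?_) i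
  simpa using hS j (by simp [hSu])

/-! ### Contraction of the diameter -/

/-- group diameter contraction rate: under persistent connectivity,
Δ_N(t_{p+1}) ≤ (1 − 𝐫(t_{p+1})^{−⌊n/2⌋}/(8n²)^{⌊n/2⌋}) Δ_N(t_p). -/
theorem stmt4 (n : ℕ) (hn : 2 ≤ n) (a : Fin n → Fin n → ℝ → ℝ) (ha : IsWeight n a)
    (x : ℝ → Fin n → ℝ) (hx : IsTrajectory n a x)
    (hconn : PersistentConn n a) (p : ℕ) :
    diam n x (tpSeq n a (p+1)) ≤
      (1 - ((rbold n a (tpSeq n a (p+1)))⁻¹ ^ (n/2)).toReal / ((8 * (n:ℝ)^2) ^ (n/2))) *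
        diam n x (tpSeq n a p) := by
  have : Nonempty (Fin n) := ⟨⟨0, by omega⟩⟩
  have hm1 : 1 ≤ n / 2 := by omega
  have hn' : (0 : ℝ) < n := by
    have : 0 < n := by omega
    exact_mod_cast this
  have hiter : ∀ q s, s ≤ (nextTime n a)^[q] s := by
    intro q s
    induction q with
    | zero => simp
    | succ q ih =>
      rw [Function.iterate_succ_apply']
      exact ih.trans (nextTime_spec hn ha hconn _).1
  have hsucc : ∀ p, tpSeq n a (p + 1) = (nextTime n a)^[n / 2] (tpSeq n a p) := fun p => by
    simp only [tpSeq, Function.iterate_succ_apply']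
  have htp : ∀ p, 0 ≤ tpSeq n a p := by
    intro p
    induction p with
    | zero => simp [tpSeq]
    | succ p ih =>
      rw [hsucc]
      exact ih.trans (hiter _ _)
  set s := tpSeq n a p with hs
  set t := tpSeq n a (p + 1) with ht
  have hst : s ≤ t := by
    rw [ht, hsucc]
    exact hiter _ _
  have hs0 : 0 ≤ s := htp p
  have ht0 : 0 ≤ t := htp (p + 1)
  set lo := ⨅ i, x s i with hlo
  set hi := ⨆ i, x s i with hhi
  have hlo_le : ∀ i, lo ≤ x s i := fun i => ciInf_le (Set.finite_range _).bddBelow i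
  have hle_hi : ∀ i, x s i ≤ hi := fun i => le_ciSup (Set.finite_range _).bddAbove i
  have hΔ : diam n x s = hi - lo := rfl
  have hΔ0 : 0 ≤ hi - lo := by
    obtain ⟨i⟩ := this
    linarith [hlo_le i, hle_hi i]
  -- a two-sided bound on the state at time `t` bounds the diameter
  have hdiam : ∀ α β, (∀ i, α ≤ x t i) → (∀ i, x t i ≤ β) → diam n x t ≤ β - α := fun α β h1 h2 =>
    sub_le_sub (ciSup_le h2) (le_ciInf h1)
  have hL := hx.affine 1 (-lo)
  have hU := hx.affine (-1) hi
  have hlo_t : ∀ i, lo ≤ x t i := hx.lower_bound ha hs0 hst hlo_le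
  have hhi_t : ∀ i, x t i ≤ hi := fun i => by
    have := hU.lower_bound ha hs0 hst (m := 0) (fun i => by linarith [hle_hi i]) i
    linarith
  have hbase := hdiam lo hi hlo_t hhi_t
  rw [hΔ]
  by_cases hfin : rbold n a t = ⊤
  · have hz : n / 2 ≠ 0 := by omega
    simpa [hfin, hz] using hbase
  rcases hΔ0.eq_or_lt with hz | hΔpos
  · rw [← hz] at hbase ⊢
    simpa using hbase
  set R := (rbold n a t).toReal with hRdef
  have hR : 1 ≤ R := one_le_rbold hn ha ht0 hfin
  have hR0 : 0 < R := by linarith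
  have hbal : ∀ u ∈ Set.Icc s ((nextTime n a)^[n / 2] s), ∀ S : Finset (Fin n),
      cutRate n a Sᶜ u ≤ R * cutRate n a S u := fun u hu S => by
    rw [← hsucc] at hu
    exact cutRate_le_of_rbold ha hfin ⟨hs0.trans hu.1, hu.2⟩ S
  have hcoef : ((rbold n a t)⁻¹ ^ (n / 2)).toReal / (8 * (n : ℝ) ^ 2) ^ (n / 2) ≤
      (1 / (4 * (n : ℝ) ^ 2 * R)) ^ (n / 2) / 2 := by
    rw [ENNReal.toReal_pow, ENNReal.toReal_inv, ← hRdef, ← div_pow]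
    have h1 : R⁻¹ / (8 * (n : ℝ) ^ 2) = 1 / (4 * (n : ℝ) ^ 2 * R) * (1 / 2) := by
      field_simp
      norm_num
    rw [h1, mul_pow, div_eq_mul_inv _ (2 : ℝ)]
    refine mul_le_mul_of_nonneg_left ?_ (by positivity)
    have h2 : ((1 : ℝ) / 2) ^ (n / 2) ≤ 1 / 2 :=
      pow_le_of_le_one (by norm_num) (by norm_num) (by omega)
    simpa using h2
  set C := (1 / (4 * (n : ℝ) ^ 2 * R)) ^ (n / 2) with hC
  set κ := ((rbold n a t)⁻¹ ^ (n / 2)).toReal / (8 * (n : ℝ) ^ 2) ^ (n / 2)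
  suffices diam n x t ≤ (hi - lo) - C * ((hi - lo) / 2) by nlinarith
  -- the closed upper half or the open lower half of the range contains at least `n - n / 2` agents
  by_cases hcard : n - n / 2 ≤ (univ.filter fun i => (hi - lo) / 2 ≤ x s i - lo).card
  · have h1 := windows hn ha hL hconn hs0 hR hbal (fun i => by linarith [hlo_le i])
      (show 0 < (hi - lo) / 2 by linarith) hcard
      (fun i hi' => by
        have := (mem_filter.1 hi').2
        linarith)
    rw [← hsucc, ← hC] at h1
    have := hdiam (lo + C * ((hi - lo) / 2)) hi (fun i => by linarith [h1 i]) hhi_t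
    linarith
  · have hcard' : n - n / 2 ≤ (univ.filter fun i => ¬ (hi - lo) / 2 ≤ x s i - lo).card := by
      have := card_filter_add_card_filter_not (s := (univ : Finset (Fin n)))
        (fun i => (hi - lo) / 2 ≤ x s i - lo)
      rw [card_univ, Fintype.card_fin] at this
      omega
    have h1 := windows hn ha hU hconn hs0 hR hbal (fun i => by linarith [hle_hi i])
      (show 0 < (hi - lo) / 2 by linarith) hcard'
      (fun i hi' => by
        have := (mem_filter.1 hi').2
        linarith)
    rw [← hsucc, ← hC] at h1
    have := hdiam lo (hi - C * ((hi - lo) / 2)) hlo_t (fun i => by linarith [h1 i])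
    linarith
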